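/- Let ν ≥ 1 and let q_1, q_2 : [0,2π)^ν → ℝ be bounded measurable with η ≤ q_k(x) ≤ M a.e. for some 0 < η ≤ M. For n ∈ ℕ set Q_k^{(n)} := T_n(q_k) and R_{k,n} := Q_k^{(n)} (Q_k^{(n)} + I)^{−1}. Then lim_{n→∞} (1/n^ν) Tr[ (I + Q_1^{(n)}) S_2(R_{1,n} ‖ R_{2,n}) ] = (2π)^{−ν} ∫_{[0,2π)^ν} (1 + q_1(x)) · S_2( r_1(x) ‖ r_2(x) ) dx, where r_k := q_k/(1 + q_k) and, for scalars 0 < a, b < 1, S_2(a‖b) := a(log a − log b) + (1−a)(log(1−a) − log(1−b)). -/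

import Mathlib

open MeasureTheory Filter Matrix Set

noncomputable section

/-- The cube `[0, 2π)^ν`. -/
def cube (ν : ℕ) : Set (Fin ν → ℝ) := Set.univ.pi fun _ => Set.Ico 0 (2 * Real.pi)

/-- Fourier coefficient of `a : [0,2π)^ν → ℂ` at `j ∈ ℤ^ν`. -/
def fourierCoefficient {ν : ℕ} (a : (Fin ν → ℝ) → ℂ) (j : Fin ν → ℤ) : ℂ :=
  (((2 * Real.pi) ^ ν : ℝ) : ℂ)⁻¹ *
    ∫ x in cube ν, a x * Complex.exp (-Complex.I * ∑ m, (j m : ℂ) * (x m : ℂ))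

/-- The Toeplitz compression `T_n(a)` with entries `â(j−k)`, `j,k ∈ {0,…,n−1}^ν`. -/
def toeplitz {ν : ℕ} (n : ℕ) (a : (Fin ν → ℝ) → ℂ) :
    Matrix (Fin ν → Fin n) (Fin ν → Fin n) ℂ :=
  Matrix.of fun j k => fourierCoefficient a fun m => (j m : ℤ) - (k m : ℤ)

/-- Logarithm of a positive definite matrix via the continuous functional calculus. -/
def mlog {m : Type*} [Fintype m] [DecidableEq m] (A : Matrix m m ℂ) : Matrix m m ℂ :=
  cfc Real.log A

/-- `S₂(A‖B) = A(log A − log B) + (I − A)(log(I−A) − log(I−B))` for matrices `0 ≺ A, B ≺ I`. -/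
def S2mat {m : Type*} [Fintype m] [DecidableEq m] (A B : Matrix m m ℂ) : Matrix m m ℂ :=
  A * (mlog A - mlog B) + (1 - A) * (mlog (1 - A) - mlog (1 - B))

/-- Scalar `S₂(a‖b) = a(log a − log b) + (1−a)(log(1−a) − log(1−b))` for `0 < a, b < 1`. -/
def S2s (a b : ℝ) : ℝ :=
  a * (Real.log a - Real.log b) + (1 - a) * (Real.log (1 - a) - Real.log (1 - b))

open scoped Pointwise

local instance instMSUnit : MeasureSpace UnitAddCircle := ⟨AddCircle.haarAddCircle⟩

local instance instHaarUnit : Measure.IsAddHaarMeasure (volume : Measure UnitAddCircle) :=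
  inferInstanceAs (Measure.IsAddHaarMeasure AddCircle.haarAddCircle)

local instance instProbUnit : IsProbabilityMeasure (volume : Measure UnitAddCircle) :=
  inferInstanceAs (IsProbabilityMeasure AddCircle.haarAddCircle)

/-- representative map -/
def rep (ν : ℕ) (t : UnitAddTorus (Fin ν)) : Fin ν → ℝ :=
  fun i => 2 * Real.pi * (AddCircle.equivIoc (1:ℝ) 0 (t i) : ℝ)

lemma measurable_rep (ν : ℕ) : Measurable (rep ν) := by
  unfold rep
  refine measurable_pi_lambda _ fun i => ?_
  refine Measurable.const_mul ?_ _
  exact measurable_subtype_coe.comp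
    ((AddCircle.measurableEquivIoc (1:ℝ) 0).measurable.comp (measurable_pi_apply i))

lemma integral_rep {E : Type*} [NormedAddCommGroup E] [NormedSpace ℝ E] {ν : ℕ}
    (f : (Fin ν → ℝ) → E) :
    ∫ t : UnitAddTorus (Fin ν), f (rep ν t) = ((2 * Real.pi) ^ ν)⁻¹ • ∫ x in cube ν, f x := by
  have hpi : (0:ℝ) < 2 * Real.pi := by positivity
  have h1 := UnitAddTorus.integral_preimage (d := Fin ν) (fun t => f (rep ν t)) 0
  refine h1.trans ?_
  have hs : {x : Fin ν → ℝ | ∀ i, x i ∈ Ioc ((0 : Fin ν → ℝ) i) ((0 : Fin ν → ℝ) i + 1)} =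
      Set.univ.pi (fun _ => Ioc (0:ℝ) 1) := by
    ext x; simp
  have hm : MeasurableSet (Set.univ.pi (fun _ : Fin ν => Ioc (0:ℝ) 1)) :=
    MeasurableSet.univ_pi fun _ => measurableSet_Ioc
  rw [hs]
  have h2 : ∫ x in Set.univ.pi (fun _ : Fin ν => Ioc (0:ℝ) 1),
      f (rep ν (fun i => (x i : UnitAddCircle))) =
      ∫ x in Set.univ.pi (fun _ : Fin ν => Ioc (0:ℝ) 1), f ((2 * Real.pi) • x) := by
    refine setIntegral_congr_fun hm fun x hx => ?_
    congr 1
    ext i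
    have hxi : x i ∈ Ioc (0:ℝ) (0 + 1) := by simpa using hx i (Set.mem_univ i)
    simp only [rep, Pi.smul_apply, smul_eq_mul]
    rw [AddCircle.equivIoc_coe_of_mem (p := (1:ℝ)) hxi]
  refine h2.trans ?_
  rw [Measure.setIntegral_comp_smul_of_pos volume f _ hpi]
  have h3 : (2 * Real.pi) • Set.univ.pi (fun _ : Fin ν => Ioc (0:ℝ) 1) =
      Set.univ.pi (fun _ : Fin ν => Ioc (0:ℝ) (2 * Real.pi)) := by
    ext x
    rw [Set.mem_smul_set_iff_inv_smul_mem₀ hpi.ne']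
    simp only [Set.mem_pi, Set.mem_univ, true_imp_iff, Pi.smul_apply, smul_eq_mul, Set.mem_Ioc]
    refine forall_congr' fun i => ?_
    rw [inv_mul_le_iff₀ hpi, mul_one, mul_pos_iff_of_pos_left (inv_pos.2 hpi)]
  rw [h3]
  have h4 : (Set.univ.pi (fun _ : Fin ν => Ioc (0:ℝ) (2 * Real.pi))) =ᵐ[volume] cube ν := by
    have a := Measure.univ_pi_Ioc_ae_eq_Icc (μ := fun _ : Fin ν => (volume : Measure ℝ))
      (f := fun _ => (0:ℝ)) (g := fun _ => 2 * Real.pi)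
    have b := Measure.univ_pi_Ico_ae_eq_Icc (μ := fun _ : Fin ν => (volume : Measure ℝ))
      (f := fun _ => (0:ℝ)) (g := fun _ => 2 * Real.pi)
    exact a.trans b.symm
  rw [setIntegral_congr_set h4]
  simp

lemma mFourier_rep {ν : ℕ} (j : Fin ν → ℤ) (t : UnitAddTorus (Fin ν)) :
    UnitAddTorus.mFourier (-j) t =
      Complex.exp (-Complex.I * ∑ m, (j m : ℂ) * (rep ν t m : ℂ)) := by
  simp only [UnitAddTorus.mFourier, ContinuousMap.coe_mk]
  rw [Finset.mul_sum, Complex.exp_sum]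
  refine Finset.prod_congr rfl fun i _ => ?_
  have h : t i = (((AddCircle.equivIoc (1:ℝ) 0 (t i) : ℝ)) : UnitAddCircle) :=
    (AddCircle.coe_equivIoc (p := (1:ℝ)) (a := 0)).symm
  conv_lhs => rw [h]
  rw [fourier_coe_apply]
  congr 1
  simp only [rep]
  push_cast
  simp
  ring

lemma fourierCoefficient_eq {ν : ℕ} (a : (Fin ν → ℝ) → ℂ) (j : Fin ν → ℤ) :
    fourierCoefficient a j = UnitAddTorus.mFourierCoeff (fun t => a (rep ν t)) j := by
  unfold fourierCoefficient UnitAddTorus.mFourierCoeff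
  have := integral_rep (ν := ν)
    (fun x => a x * Complex.exp (-Complex.I * ∑ m, (j m : ℂ) * (x m : ℂ)))
  simp only [mFourier_rep, smul_eq_mul]
  simp only [mul_comm (Complex.exp _)]
  refine Eq.trans ?_ this.symm
  rw [Complex.real_smul]
  push_cast
  rfl

lemma fourierCoefficient_one {ν : ℕ} (j : Fin ν → ℤ) :
    fourierCoefficient (ν := ν) (fun _ => 1) j = if j = 0 then 1 else 0 := by
  rw [fourierCoefficient_eq]
  unfold UnitAddTorus.mFourierCoeff
  have h := (orthonormal_iff_ite.mp (UnitAddTorus.orthonormal_mFourier (d := Fin ν))) j 0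
  simp only [ContinuousMap.inner_toLp, ← UnitAddTorus.mFourier_neg, ← UnitAddTorus.mFourier_add] at h
  rw [← h]
  refine integral_congr_ae (ae_of_all _ fun t => ?_)
  simp

lemma parseval {ν : ℕ} (b : (Fin ν → ℝ) → ℝ) (M : ℝ) (hb : Measurable b)
    (hM : ∀ x, |b x| ≤ M) :
    HasSum (fun j : Fin ν → ℤ => ‖fourierCoefficient (fun x => (b x : ℂ)) j‖ ^ 2)
      (((2 * Real.pi) ^ ν)⁻¹ * ∫ x in cube ν, b x ^ 2) := by
  have hmem : MemLp (fun t : UnitAddTorus (Fin ν) => (b (rep ν t) : ℂ)) 2 volume := by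
    refine MemLp.of_bound ?_ M (ae_of_all _ fun t => ?_)
    · exact (Complex.measurable_ofReal.comp (hb.comp (measurable_rep ν))).aestronglyMeasurable
    · simpa using hM _
  have h := UnitAddTorus.hasSum_sq_mFourierCoeff (hmem.toLp _)
  have hae := hmem.coeFn_toLp
  have e1 : ∀ j, UnitAddTorus.mFourierCoeff (hmem.toLp _) j
      = fourierCoefficient (fun x => (b x : ℂ)) j := by
    intro j
    rw [fourierCoefficient_eq]
    unfold UnitAddTorus.mFourierCoeff
    refine integral_congr_ae ?_
    filter_upwards [hae] with t ht
    rw [ht]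
  have e2 : ∫ t, ‖(hmem.toLp _ : UnitAddTorus (Fin ν) → ℂ) t‖ ^ 2 = ((2 * Real.pi) ^ ν)⁻¹ * ∫ x in cube ν, b x ^ 2 := by
    rw [← smul_eq_mul, ← integral_rep]
    refine integral_congr_ae ?_
    filter_upwards [hae] with t ht
    rw [ht]; simp
  simp only [e1, e2] at h
  exact h

lemma count_lower {ν : ℕ} (c : (Fin ν → ℤ) → ℝ) (hc : ∀ j, 0 ≤ c j)
    (F : Finset (Fin ν → ℤ)) (K n : ℕ) (hK : ∀ m ∈ F, ∀ i, |m i| ≤ (K:ℤ)) :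
    ((n - K : ℕ) : ℝ) ^ ν * ∑ m ∈ F, c m ≤
      ∑ j : Fin ν → Fin n, ∑ k : Fin ν → Fin n, c (fun i => (j i : ℤ) - (k i : ℤ)) := by
  classical
  rw [← Finset.sum_product']
  let φ : {m // m ∈ F} × (Fin ν → Fin (n - K)) → (Fin ν → Fin n) × (Fin ν → Fin n) := fun p =>
    (fun i => ⟨(p.2 i : ℕ) + (p.1.1 i).toNat, by
        have h1 := (p.2 i).2
        have h2 := hK p.1.1 p.1.2 i
        rw [abs_le] at h2
        omega⟩,
     fun i => ⟨(p.2 i : ℕ) + (-(p.1.1 i)).toNat, by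
        have h1 := (p.2 i).2
        have h2 := hK p.1.1 p.1.2 i
        rw [abs_le] at h2
        omega⟩)
  have hdiff : ∀ p, (fun i => (((φ p).1 i : ℕ) : ℤ) - (((φ p).2 i : ℕ) : ℤ)) = p.1.1 := by
    intro p
    ext i
    simp only [φ]
    push_cast
    omega
  have hinj : Function.Injective φ := by
    intro p q hpq
    have h1 : p.1.1 = q.1.1 := by rw [← hdiff p, ← hdiff q, hpq]
    have h2 : p.1 = q.1 := Subtype.ext h1
    refine Prod.ext h2 ?_
    ext i
    have h3 := congrArg (fun z => ((z.1 i : Fin n) : ℕ)) hpq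
    simp only [φ, h1] at h3
    omega
  have hsum : ((n - K : ℕ) : ℝ) ^ ν * ∑ m ∈ F, c m =
      ∑ p : {m // m ∈ F} × (Fin ν → Fin (n - K)),
        c (fun i => (((φ p).1 i : ℕ) : ℤ) - (((φ p).2 i : ℕ) : ℤ)) := by
    simp only [hdiff]
    rw [Fintype.sum_prod_type]
    simp only [Finset.sum_const, Finset.card_univ, Fintype.card_pi, Fintype.card_fin,
      Finset.prod_const, nsmul_eq_mul]
    rw [← Finset.mul_sum, Finset.sum_coe_sort F c]
    push_cast
    rfl
  rw [hsum]
  have := Finset.sum_image (s := Finset.univ) (g := φ)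
    (f := fun q : (Fin ν → Fin n) × (Fin ν → Fin n) =>
      c (fun i => ((q.1 i : ℕ) : ℤ) - ((q.2 i : ℕ) : ℤ))) (hinj.injOn)
  rw [← this]
  refine Finset.sum_le_sum_of_subset_of_nonneg ?_ fun _ _ _ => hc _
  intro x _
  simp

lemma frob_lower {ν : ℕ} (c : (Fin ν → ℤ) → ℝ) (hc : ∀ j, 0 ≤ c j) (S : ℝ) (hS : HasSum c S)
    (ε : ℝ) (hε : 0 < ε) :
    ∀ᶠ n : ℕ in atTop, S - ε < ((n:ℝ) ^ ν)⁻¹ *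
      ∑ j : Fin ν → Fin n, ∑ k : Fin ν → Fin n, c (fun i => (j i : ℤ) - (k i : ℤ)) := by
  obtain ⟨F, hF⟩ := (hS.eventually (lt_mem_nhds (show S - ε < S by linarith))).exists
  obtain ⟨K, hK⟩ : ∃ K : ℕ, ∀ m ∈ F, ∀ i, |m i| ≤ (K:ℤ) := by
    refine ⟨∑ m ∈ F, ∑ i, (m i).natAbs, fun m hm i => ?_⟩
    have h1 : (m i).natAbs ≤ ∑ i, (m i).natAbs :=
      Finset.single_le_sum (f := fun i => (m i).natAbs) (fun _ _ => Nat.zero_le _) (Finset.mem_univ i)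
    have h2 : ∑ i, (m i).natAbs ≤ ∑ m ∈ F, ∑ i, (m i).natAbs :=
      Finset.single_le_sum (f := fun m : Fin ν → ℤ => ∑ i, (m i).natAbs)
        (fun _ _ => Nat.zero_le _) hm
    rw [Int.abs_eq_natAbs]
    exact_mod_cast h1.trans h2
  have hlim : Tendsto (fun n : ℕ => (1 - (K:ℝ) / n) ^ ν * ∑ m ∈ F, c m) atTop
      (nhds ((1 - 0) ^ ν * ∑ m ∈ F, c m)) :=
    ((tendsto_const_nhds.sub (tendsto_const_div_atTop_nhds_zero_nat (K:ℝ))).pow ν).mul_const _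
  simp only [sub_zero, one_pow, one_mul] at hlim
  filter_upwards [hlim.eventually (lt_mem_nhds hF), eventually_ge_atTop K, eventually_gt_atTop 0]
    with n h1 h2 h3
  refine h1.trans_le ?_
  have h := count_lower c hc F K n hK
  have hn : (0:ℝ) < n := by exact_mod_cast h3
  have : (1 - (K:ℝ) / n) ^ ν = ((n:ℝ) ^ ν)⁻¹ * ((n - K : ℕ) : ℝ) ^ ν := by
    rw [Nat.cast_sub h2, ← inv_pow, ← mul_pow]
    congr 1
    field_simp
  rw [this, mul_assoc]
  gcongr

section mat

set_option linter.unusedSectionVars false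

variable {m : Type*} [Fintype m] [DecidableEq m]

lemma diag_conj (U A : Matrix m m ℂ) (i : m) :
    (star U * A * U) i i = ∑ j, ∑ k, star (U j i) * A j k * U k i := by
  simp only [Matrix.mul_apply, Matrix.star_apply, Finset.sum_mul]
  rw [Finset.sum_comm]

lemma trace_cfc {B : Matrix m m ℂ} (hB : B.IsHermitian) (A : Matrix m m ℂ) (f : ℝ → ℝ) :
    (A * cfc f B).trace = ∑ i, (f (hB.eigenvalues i) : ℂ) *
      ∑ j, ∑ k, star ((hB.eigenvectorUnitary : Matrix m m ℂ) j i) * A j k *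
        (hB.eigenvectorUnitary : Matrix m m ℂ) k i := by
  rw [hB.cfc_eq, Matrix.IsHermitian.cfc, Unitary.conjStarAlgAut_apply]
  set U : Matrix m m ℂ := (hB.eigenvectorUnitary : Matrix m m ℂ)
  simp only [← diag_conj]
  have : (A * (U * Matrix.diagonal (RCLike.ofReal ∘ f ∘ hB.eigenvalues) * star U)).trace
      = ((star U * A * U) * Matrix.diagonal (RCLike.ofReal ∘ f ∘ hB.eigenvalues)).trace := by
    rw [← mul_assoc, Matrix.trace_mul_comm, ← mul_assoc, ← mul_assoc]
  rw [this, Matrix.trace]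
  refine Finset.sum_congr rfl fun i _ => ?_
  rw [Matrix.diag_apply, Matrix.mul_diagonal, mul_comm]
  rfl

lemma eig_quad {B : Matrix m m ℂ} (hB : B.IsHermitian) (i : m) :
    ∑ j, ∑ k, star ((hB.eigenvectorUnitary : Matrix m m ℂ) j i) * B j k *
        (hB.eigenvectorUnitary : Matrix m m ℂ) k i = (hB.eigenvalues i : ℂ) := by
  rw [← diag_conj]
  have := hB.conjStarAlgAut_star_eigenvectorUnitary
  rw [Unitary.conjStarAlgAut_star_apply] at this
  rw [this, Matrix.diagonal_apply_eq]
  rfl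

lemma unitary_row {B : Matrix m m ℂ} (hB : B.IsHermitian) (j k : m) :
    ∑ i, (hB.eigenvectorUnitary : Matrix m m ℂ) k i *
      star ((hB.eigenvectorUnitary : Matrix m m ℂ) j i) = if k = j then 1 else 0 := by
  have := congrFun (congrFun (Unitary.coe_mul_star_self hB.eigenvectorUnitary) k) j
  rw [Matrix.mul_apply, Matrix.one_apply] at this
  exact this

end mat

/-- plane wave -/
def pw {ν n : ℕ} (k : Fin ν → Fin n) (x : Fin ν → ℝ) : ℂ :=
  Complex.exp (Complex.I * ∑ i, (((k i : ℕ) : ℤ) : ℂ) * (x i : ℂ))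

/-- trigonometric polynomial -/
def ev {ν n : ℕ} (v : (Fin ν → Fin n) → ℂ) (x : Fin ν → ℝ) : ℂ := ∑ k, v k * pw k x

lemma star_pw {ν n : ℕ} (k : Fin ν → Fin n) (x : Fin ν → ℝ) :
    star (pw k x) = Complex.exp (-Complex.I * ∑ i, (((k i : ℕ) : ℤ) : ℂ) * (x i : ℂ)) := by
  unfold pw
  rw [Complex.star_def, ← Complex.exp_conj]
  congr 1
  simp

lemma pw_diff {ν n : ℕ} (j k : Fin ν → Fin n) (x : Fin ν → ℝ) :
    Complex.exp (-Complex.I * ∑ i, ((((j i : ℕ) : ℤ) - ((k i : ℕ) : ℤ) : ℤ) : ℂ) * (x i : ℂ))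
      = star (pw j x) * pw k x := by
  rw [star_pw, pw, ← Complex.exp_add]
  congr 1
  simp only [Int.cast_sub, sub_mul, Finset.sum_sub_distrib]
  ring

lemma norm_pw {ν n : ℕ} (k : Fin ν → Fin n) (x : Fin ν → ℝ) : star (pw k x) * pw k x = 1 := by
  rw [← pw_diff]; simp

lemma continuous_pw {ν n : ℕ} (k : Fin ν → Fin n) : Continuous (pw (ν := ν) k) := by
  unfold pw; fun_prop

lemma continuous_ev {ν n : ℕ} (v : (Fin ν → Fin n) → ℂ) : Continuous (ev (ν := ν) v) := by
  unfold ev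
  exact continuous_finsetSum _ fun k _ => continuous_const.mul (continuous_pw k)

lemma cube_finite (ν : ℕ) : volume (cube ν) < ⊤ := by
  unfold cube
  rw [Real.volume_pi_Ico]
  exact ENNReal.prod_lt_top fun _ _ => ENNReal.ofReal_lt_top

instance instFinCube (ν : ℕ) : IsFiniteMeasure (volume.restrict (cube ν)) :=
  ⟨by simpa using cube_finite ν⟩

lemma cube_volume (ν : ℕ) : (volume.restrict (cube ν)).real Set.univ = (2 * Real.pi) ^ ν := by
  have : (0:ℝ) ≤ 2 * Real.pi := by positivity
  simp [Measure.real, cube, Real.volume_pi_Ico, Real.pi_pos.le]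

lemma norm_pw' {ν n : ℕ} (k : Fin ν → Fin n) (x : Fin ν → ℝ) : ‖pw k x‖ = 1 := by
  have h := norm_pw k x
  have := congrArg norm h
  rw [norm_mul, norm_star, norm_one] at this
  nlinarith [norm_nonneg (pw k x)]

lemma ev_bound {ν n : ℕ} (v : (Fin ν → Fin n) → ℂ) (x : Fin ν → ℝ) :
    ‖ev v x‖ ≤ ∑ k, ‖v k‖ := by
  unfold ev
  refine (norm_sum_le _ _).trans (Finset.sum_le_sum fun k _ => ?_)
  rw [norm_mul, norm_pw', mul_one]

lemma integrable_ev {ν n : ℕ} (v : (Fin ν → Fin n) → ℂ) (a : (Fin ν → ℝ) → ℝ) (A : ℝ)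
    (ha : Measurable a) (hA : ∀ x, |a x| ≤ A) :
    Integrable (fun x => a x * ‖ev v x‖ ^ 2) (volume.restrict (cube ν)) := by
  refine Integrable.of_bound (C := A * (∑ k, ‖v k‖) ^ 2) ?_ (ae_of_all _ fun x => ?_)
  · exact (ha.mul ((continuous_ev v).norm.pow 2).measurable).aestronglyMeasurable
  · rw [norm_mul, norm_pow, norm_norm]
    have := ev_bound v x
    have h2 := hA x
    have h3 : 0 ≤ A := (abs_nonneg _).trans h2
    rw [Real.norm_eq_abs]
    gcongr

lemma quad {ν n : ℕ} (v : (Fin ν → Fin n) → ℂ) (a : (Fin ν → ℝ) → ℝ) (A : ℝ)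
    (ha : Measurable a) (hA : ∀ x, |a x| ≤ A) :
    ∑ j, ∑ k, star (v j) * toeplitz n (fun x => (a x : ℂ)) j k * v k =
      ((((2 * Real.pi) ^ ν)⁻¹ * ∫ x in cube ν, a x * ‖ev v x‖ ^ 2 : ℝ) : ℂ) := by
  have hint : ∀ j k : Fin ν → Fin n, Integrable (fun x => star (v j) * ((a x : ℂ) *
      (star (pw j x) * pw k x)) * v k) (volume.restrict (cube ν)) := by
    intro j k
    refine Integrable.of_bound (C := ‖v j‖ * A * ‖v k‖) ?_ (ae_of_all _ fun x => ?_)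
    · have h1 : Measurable (fun x => (a x : ℂ)) := Complex.measurable_ofReal.comp ha
      have h2 := (continuous_pw j).measurable
      have h3 := (continuous_pw k).measurable
      have h4 : Measurable (fun x => star (pw j x)) := (continuous_star.comp (continuous_pw j)).measurable
      exact (((h1.mul (h4.mul h3)).const_mul _).mul_const _).aestronglyMeasurable
    · simp only [norm_mul, norm_star, norm_pw', mul_one, Complex.norm_real, Real.norm_eq_abs]
      have := hA x
      gcongr
  push_cast
  rw [← integral_complex_ofReal]
  have hpt : ∀ x, ((a x * ‖ev v x‖ ^ 2 : ℝ) : ℂ) = ∑ j, ∑ k, star (v j) * ((a x : ℂ) *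
      (star (pw j x) * pw k x)) * v k := by
    intro x
    have : ((‖ev v x‖ ^ 2 : ℝ) : ℂ) = star (ev v x) * ev v x := by
      rw [Complex.star_def, Complex.conj_mul']; push_cast; rfl
    rw [Complex.ofReal_mul, this]
    simp only [ev, star_sum, Finset.sum_mul_sum, star_mul']
    simp only [Finset.mul_sum]
    refine Finset.sum_congr rfl fun j _ => Finset.sum_congr rfl fun k _ => ?_
    ring
  simp only [hpt]
  rw [integral_finsetSum _ fun j _ => integrable_finsetSum _ fun k _ => hint j k, Finset.mul_sum]
  refine Finset.sum_congr rfl fun j _ => ?_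
  rw [integral_finsetSum _ fun k _ => hint j k, Finset.mul_sum]
  refine Finset.sum_congr rfl fun k _ => ?_
  rw [integral_mul_const, integral_const_mul]
  simp only [toeplitz, Matrix.of_apply, fourierCoefficient, pw_diff]
  push_cast
  ring

lemma ev_sum {ν n : ℕ} {B : Matrix (Fin ν → Fin n) (Fin ν → Fin n) ℂ} (hB : B.IsHermitian)
    (x : Fin ν → ℝ) :
    ∑ i, ‖ev (fun k => (hB.eigenvectorUnitary : Matrix (Fin ν → Fin n) (Fin ν → Fin n) ℂ) k i) x‖ ^ 2 = (n:ℝ) ^ ν := by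
  have h : ∀ i, ((‖ev (fun k => (hB.eigenvectorUnitary : Matrix (Fin ν → Fin n) (Fin ν → Fin n) ℂ) k i) x‖ ^ 2 : ℝ) : ℂ) =
      ∑ j, ∑ k, (star (pw j x) * pw k x) * ((hB.eigenvectorUnitary : Matrix (Fin ν → Fin n) (Fin ν → Fin n) ℂ) k i *
        star ((hB.eigenvectorUnitary : Matrix (Fin ν → Fin n) (Fin ν → Fin n) ℂ) j i)) := by
    intro i
    have : ∀ z : ℂ, ((‖z‖ ^ 2 : ℝ) : ℂ) = star z * z := fun z => by
      rw [Complex.star_def, Complex.conj_mul']; push_cast; rfl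
    rw [this]
    simp only [ev, star_sum, Finset.sum_mul_sum, star_mul']
    refine Finset.sum_congr rfl fun j _ => Finset.sum_congr rfl fun k _ => ?_
    ring
  have : ((∑ i, ‖ev (fun k => (hB.eigenvectorUnitary : Matrix (Fin ν → Fin n) (Fin ν → Fin n) ℂ) k i) x‖ ^ 2 : ℝ) : ℂ)
      = ((n:ℝ) ^ ν : ℝ) := by
    rw [Complex.ofReal_sum]
    simp only [h]
    rw [Finset.sum_comm]
    have e : ∀ j : Fin ν → Fin n, ∑ i, ∑ k, (star (pw j x) * pw k x) *
        ((hB.eigenvectorUnitary : Matrix (Fin ν → Fin n) (Fin ν → Fin n) ℂ) k i *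
        star ((hB.eigenvectorUnitary : Matrix (Fin ν → Fin n) (Fin ν → Fin n) ℂ) j i)) = 1 := by
      intro j
      rw [Finset.sum_comm]
      simp only [← Finset.mul_sum, unitary_row]
      simp only [mul_ite, mul_one, mul_zero, Finset.sum_ite_eq', Finset.mem_univ, if_true]
      exact norm_pw j x
    simp only [e]
    simp
  exact_mod_cast this

lemma toeplitz_one {ν n : ℕ} : toeplitz (ν := ν) n (fun _ => 1) = 1 := by
  ext j k
  simp only [toeplitz, Matrix.of_apply, fourierCoefficient_one, Matrix.one_apply]
  congr 1
  simp only [funext_iff, Pi.zero_apply, sub_eq_zero, eq_iff_iff]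
  refine forall_congr' fun i => ?_
  rw [Fin.ext_iff]; norm_cast

lemma toeplitz_herm {ν n : ℕ} (a : (Fin ν → ℝ) → ℝ) :
    (toeplitz n (fun x => (a x : ℂ))).IsHermitian := by
  ext j k
  simp only [Matrix.conjTranspose_apply, toeplitz, Matrix.of_apply, fourierCoefficient]
  rw [Complex.star_def, map_mul, ← integral_conj, ← Complex.ofReal_inv, Complex.conj_ofReal]
  congr 1
  refine integral_congr_ae (ae_of_all _ fun x => ?_)
  simp only [pw_diff]
  simp only [map_mul, Complex.conj_ofReal, Complex.star_def, Complex.conj_conj]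
  ring

/-- bounded measurable -/
def Bd {ν : ℕ} (g : (Fin ν → ℝ) → ℝ) : Prop := Measurable g ∧ ∃ C, ∀ x, |g x| ≤ C

/-- average over the cube -/
def av {ν : ℕ} (g : (Fin ν → ℝ) → ℝ) : ℝ := ((2 * Real.pi) ^ ν)⁻¹ * ∫ x in cube ν, g x

section av
variable {ν : ℕ} {g h : (Fin ν → ℝ) → ℝ}

lemma Bd.integrable (hg : Bd g) : Integrable g (volume.restrict (cube ν)) := by
  obtain ⟨hm, C, hC⟩ := hg
  exact Integrable.of_bound hm.aestronglyMeasurable C (ae_of_all _ hC)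

lemma Bd.const (c : ℝ) : Bd (ν := ν) (fun _ => c) := ⟨measurable_const, |c|, fun _ => le_rfl⟩

lemma Bd.add (hg : Bd g) (hh : Bd h) : Bd (fun x => g x + h x) := by
  obtain ⟨hm, C, hC⟩ := hg
  obtain ⟨hm', C', hC'⟩ := hh
  exact ⟨hm.add hm', C + C', fun x => (abs_add_le _ _).trans (add_le_add (hC x) (hC' x))⟩

lemma Bd.sub (hg : Bd g) (hh : Bd h) : Bd (fun x => g x - h x) := by
  obtain ⟨hm, C, hC⟩ := hg
  obtain ⟨hm', C', hC'⟩ := hh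
  exact ⟨hm.sub hm', C + C', fun x => (abs_sub _ _).trans (add_le_add (hC x) (hC' x))⟩

lemma Bd.mul (hg : Bd g) (hh : Bd h) : Bd (fun x => g x * h x) := by
  obtain ⟨hm, C, hC⟩ := hg
  obtain ⟨hm', C', hC'⟩ := hh
  refine ⟨hm.mul hm', C * C', fun x => ?_⟩
  rw [abs_mul]
  exact mul_le_mul (hC x) (hC' x) (abs_nonneg _) ((abs_nonneg _).trans (hC x))

lemma Bd.ev {n : ℕ} (v : (Fin ν → Fin n) → ℂ) : Bd (fun x => ‖ev v x‖ ^ 2) := by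
  refine ⟨((continuous_ev v).norm.pow 2).measurable, (∑ k, ‖v k‖) ^ 2, fun x => ?_⟩
  rw [abs_of_nonneg (by positivity)]
  exact pow_le_pow_left₀ (norm_nonneg _) (ev_bound v x) 2

lemma av_add (hg : Bd g) (hh : Bd h) : av (fun x => g x + h x) = av g + av h := by
  unfold av; rw [integral_add hg.integrable hh.integrable]; ring

lemma av_sub (hg : Bd g) (hh : Bd h) : av (fun x => g x - h x) = av g - av h := by
  unfold av; rw [integral_sub hg.integrable hh.integrable]; ring

lemma av_const_mul (c : ℝ) : av (fun x => c * g x) = c * av g := by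
  unfold av; rw [integral_const_mul]; ring

lemma av_mono (hg : Bd g) (hh : Bd h) (hgh : ∀ x, g x ≤ h x) : av g ≤ av h := by
  unfold av
  have := integral_mono hg.integrable hh.integrable hgh
  exact mul_le_mul_of_nonneg_left this (by positivity)

lemma av_sum {ι : Type*} (s : Finset ι) (G : ι → (Fin ν → ℝ) → ℝ) (hG : ∀ i, Bd (G i)) :
    av (fun x => ∑ i ∈ s, G i x) = ∑ i ∈ s, av (G i) := by
  unfold av; rw [integral_finsetSum _ fun i _ => (hG i).integrable, Finset.mul_sum]

lemma av_one : av (ν := ν) (fun _ => 1) = 1 := by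
  unfold av
  rw [integral_const, cube_volume]
  have : (2 * Real.pi) ^ ν ≠ 0 := by positivity
  simp [this]

lemma abs_av_le (hg : Bd g) (hh : Bd h) (hgh : ∀ x, |g x| ≤ h x) : |av g| ≤ av h := by
  rw [abs_le]
  constructor
  · have := av_mono (g := fun x => (-1) * h x) ((Bd.const (-1)).mul hh) hg
      (fun x => by linarith [(abs_le.1 (hgh x)).1])
    rw [av_const_mul] at this; linarith
  · exact av_mono hg hh fun x => (abs_le.1 (hgh x)).2

end av

/-- the density of the `i`th eigenvector -/
def wt {ν n : ℕ} {B : Matrix (Fin ν → Fin n) (Fin ν → Fin n) ℂ} (hB : B.IsHermitian)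
    (i : Fin ν → Fin n) (x : Fin ν → ℝ) : ℝ :=
  ‖ev (fun k => (hB.eigenvectorUnitary : Matrix (Fin ν → Fin n) (Fin ν → Fin n) ℂ) k i) x‖ ^ 2

section main
variable {ν n : ℕ} {B : Matrix (Fin ν → Fin n) (Fin ν → Fin n) ℂ} (hB : B.IsHermitian)

lemma wt_bd (i : Fin ν → Fin n) : Bd (wt hB i) := Bd.ev _

lemma wt_nonneg (i : Fin ν → Fin n) (x : Fin ν → ℝ) : 0 ≤ wt hB i x := by
  unfold wt; positivity

lemma wt_sum (x : Fin ν → ℝ) : ∑ i, wt hB i x = (n:ℝ) ^ ν := ev_sum hB x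

lemma wt_quad {a : (Fin ν → ℝ) → ℝ} (ha : Bd a) (i : Fin ν → Fin n) :
    ∑ j, ∑ k, star ((hB.eigenvectorUnitary : Matrix (Fin ν → Fin n) (Fin ν → Fin n) ℂ) j i) *
      toeplitz n (fun x => (a x : ℂ)) j k *
      (hB.eigenvectorUnitary : Matrix (Fin ν → Fin n) (Fin ν → Fin n) ℂ) k i =
      ((av (fun x => a x * wt hB i x) : ℝ) : ℂ) := by
  obtain ⟨hm, C, hC⟩ := ha
  exact quad _ a C hm hC

lemma wt_av (i : Fin ν → Fin n) : av (wt hB i) = 1 := by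
  have h := wt_quad hB (Bd.const 1) i
  simp only [one_mul, Complex.ofReal_one, toeplitz_one] at h
  rw [← diag_conj] at h
  simp only [mul_one, Unitary.coe_star_mul_self, Matrix.one_apply_eq] at h
  exact_mod_cast h.symm

lemma av_wt_sum {g : (Fin ν → ℝ) → ℝ} (hg : Bd g) :
    ∑ i, av (fun x => g x * wt hB i x) = (n:ℝ) ^ ν * av g := by
  rw [← av_sum _ _ fun i => hg.mul (wt_bd hB i), ← av_const_mul]
  congr 1
  ext x
  rw [← Finset.mul_sum, wt_sum, mul_comm]

lemma eig_av {b : (Fin ν → ℝ) → ℝ} (hb : Bd b)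
    (hB : (toeplitz n (fun x => (b x : ℂ))).IsHermitian) (i : Fin ν → Fin n) :
    av (fun x => b x * wt hB i x) = hB.eigenvalues i := by
  have h := wt_quad hB hb i
  rw [eig_quad] at h
  exact_mod_cast h.symm

lemma eig_mem {b : (Fin ν → ℝ) → ℝ} (hb : Bd b) {η M : ℝ} (hbm : ∀ x, b x ∈ Icc η M)
    (hB : (toeplitz n (fun x => (b x : ℂ))).IsHermitian) (i : Fin ν → Fin n) :
    hB.eigenvalues i ∈ Icc η M := by
  rw [← eig_av hb hB i]
  have h1 : av (fun x => η * wt hB i x) = η := by rw [av_const_mul, wt_av, mul_one]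
  have h2 : av (fun x => M * wt hB i x) = M := by rw [av_const_mul, wt_av, mul_one]
  constructor
  · rw [← h1]
    exact av_mono ((Bd.const _).mul (wt_bd hB i)) (hb.mul (wt_bd hB i)) fun x =>
      mul_le_mul_of_nonneg_right (hbm x).1 (wt_nonneg hB i x)
  · conv_rhs => rw [← h2]
    exact av_mono (hb.mul (wt_bd hB i)) ((Bd.const _).mul (wt_bd hB i)) fun x =>
      mul_le_mul_of_nonneg_right (hbm x).2 (wt_nonneg hB i x)

lemma trace_av {a : (Fin ν → ℝ) → ℝ} (ha : Bd a) (f : ℝ → ℝ) :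
    (toeplitz n (fun x => (a x : ℂ)) * cfc f B).trace =
      ((∑ i, f (hB.eigenvalues i) * av (fun x => a x * wt hB i x) : ℝ) : ℂ) := by
  rw [trace_cfc hB]
  simp only [wt_quad hB ha]
  push_cast
  rfl

lemma eig_sq {b : (Fin ν → ℝ) → ℝ} (hb : Bd b)
    (hB : (toeplitz n (fun x => (b x : ℂ))).IsHermitian) :
    ∑ i, hB.eigenvalues i ^ 2 = ∑ j : Fin ν → Fin n, ∑ k : Fin ν → Fin n,
      ‖fourierCoefficient (fun x => (b x : ℂ)) (fun i => (j i : ℤ) - (k i : ℤ))‖ ^ 2 := by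
  have h := trace_av hB hb id
  rw [cfc_id ℝ _ hB.isSelfAdjoint] at h
  simp only [eig_av hb hB, id] at h
  have h2 : (toeplitz n (fun x => (b x : ℂ)) * toeplitz n (fun x => (b x : ℂ))).trace =
      ((∑ j : Fin ν → Fin n, ∑ k : Fin ν → Fin n,
      ‖toeplitz n (fun x => (b x : ℂ)) j k‖ ^ 2 : ℝ) : ℂ) := by
    rw [Matrix.trace]
    push_cast
    refine Finset.sum_congr rfl fun j _ => ?_
    rw [Matrix.diag_apply, Matrix.mul_apply]
    refine Finset.sum_congr rfl fun k _ => ?_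
    rw [← hB.apply k j, Complex.star_def, Complex.mul_conj']
  rw [h2] at h
  have h3 := Complex.ofReal_injective h
  simp only [pow_two] at h3 ⊢
  exact h3.symm

lemma key_bound {a b : (Fin ν → ℝ) → ℝ} (ha : Bd a) (hb : Bd b) {A L η M δ : ℝ}
    (hA : ∀ x, |a x| ≤ A) (hL : 0 ≤ L) (hδ : 0 < δ)
    (hbm : ∀ x, b x ∈ Icc η M) (f : ℝ → ℝ) (hfb : Bd (fun x => f (b x)))
    (hf : ∀ s ∈ Icc η M, ∀ t ∈ Icc η M, |f s - f t| ≤ L * |s - t|)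
    (hB : (toeplitz n (fun x => (b x : ℂ))).IsHermitian) :
    |∑ i, f (hB.eigenvalues i) * av (fun x => a x * wt hB i x)
      - (n:ℝ) ^ ν * av (fun x => a x * f (b x))| ≤
    A * L * (δ * (n:ℝ) ^ ν + δ⁻¹ * ((n:ℝ) ^ ν * av (fun x => b x ^ 2) -
      ∑ i, hB.eigenvalues i ^ 2)) := by
  have hA0 : 0 ≤ A := (abs_nonneg _).trans (hA 0)
  have hb2 : Bd (fun x => b x ^ 2) := by simpa only [pow_two] using hb.mul hb
  rw [← av_wt_sum hB (ha.mul hfb), ← Finset.sum_sub_distrib]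
  have hsq : ∀ i, av (fun x => (hB.eigenvalues i - b x) ^ 2 * wt hB i x) =
      av (fun x => b x ^ 2 * wt hB i x) - hB.eigenvalues i ^ 2 := by
    intro i
    set l := hB.eigenvalues i with hl
    have e : (fun x => (l - b x) ^ 2 * wt hB i x) = fun x => (b x ^ 2 * wt hB i x -
        (2 * l) * (b x * wt hB i x)) + l ^ 2 * wt hB i x := by ext x; ring
    have w := wt_bd hB i
    rw [e, av_add ((hb2.mul w).sub ((Bd.const _).mul (hb.mul w))) ((Bd.const _).mul w),
      av_sub (hb2.mul w) ((Bd.const _).mul (hb.mul w)), av_const_mul, av_const_mul, wt_av,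
      eig_av hb, ← hl]
    ring
  have hterm : ∀ i, |f (hB.eigenvalues i) * av (fun x => a x * wt hB i x) -
      av (fun x => a x * f (b x) * wt hB i x)| ≤
      A * L * (δ + δ⁻¹ * (av (fun x => b x ^ 2 * wt hB i x) - hB.eigenvalues i ^ 2)) := by
    intro i
    rw [← hsq]
    have w := wt_bd hB i
    set l := hB.eigenvalues i with hl
    have hlb : Bd (fun x => (l - b x) ^ 2) := by
      simpa only [pow_two] using ((Bd.const l).sub hb).mul ((Bd.const l).sub hb)
    rw [← av_const_mul, ← av_sub ((Bd.const _).mul (ha.mul w)) ((ha.mul hfb).mul w)]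
    have hR : A * L * (δ + δ⁻¹ * av (fun x => (l - b x) ^ 2 * wt hB i x)) =
        av (fun x => A * L * (δ * wt hB i x + δ⁻¹ * ((l - b x) ^ 2 * wt hB i x))) := by
      rw [av_const_mul, av_add ((Bd.const _).mul w) ((Bd.const _).mul (hlb.mul w)),
        av_const_mul, av_const_mul, wt_av, mul_one]
    rw [hR]
    refine abs_av_le (((Bd.const _).mul (ha.mul w)).sub ((ha.mul hfb).mul w))
      ((Bd.const _).mul (((Bd.const _).mul w).add ((Bd.const _).mul (hlb.mul w)))) fun x => ?_
    have e : f l * (a x * wt hB i x) - a x * f (b x) * wt hB i x =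
      a x * (f l - f (b x)) * wt hB i x := by ring
    rw [e, abs_mul, abs_mul, abs_of_nonneg (wt_nonneg hB i x)]
    have h1 := hf l (eig_mem hb hbm hB i) (b x) (hbm x)
    have h2 : |l - b x| ≤ δ + δ⁻¹ * (l - b x) ^ 2 := by
      rw [← sq_abs]
      set t := |l - b x|
      have ht : 0 ≤ t := abs_nonneg _
      have : δ * t ≤ δ * (δ + δ⁻¹ * t ^ 2) := by
        rw [mul_add, ← mul_assoc, mul_inv_cancel₀ hδ.ne', one_mul]
        nlinarith [sq_nonneg (δ - t), sq_nonneg t, sq_nonneg δ]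
      exact le_of_mul_le_mul_left this hδ
    have h3 : |a x| * |f l - f (b x)| ≤ A * (L * (δ + δ⁻¹ * (l - b x) ^ 2)) := by
      refine mul_le_mul (hA x) (h1.trans ?_) (abs_nonneg _) hA0
      gcongr
    calc _ ≤ A * (L * (δ + δ⁻¹ * (l - b x) ^ 2)) * wt hB i x :=
          mul_le_mul_of_nonneg_right h3 (wt_nonneg hB i x)
      _ = _ := by ring
  refine (Finset.abs_sum_le_sum_abs _ _).trans ((Finset.sum_le_sum fun i _ => hterm i).trans ?_)
  rw [← Finset.mul_sum, Finset.sum_add_distrib, ← Finset.mul_sum, Finset.sum_sub_distrib,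
    av_wt_sum hB hb2]
  simp
  apply le_of_eq
  ring

end main

lemma key_limit {ν : ℕ} {a b : (Fin ν → ℝ) → ℝ} (ha : Bd a) (hb : Bd b) {L η M : ℝ}
    (hL : 0 ≤ L)
    (hbm : ∀ x, b x ∈ Icc η M) (f : ℝ → ℝ) (hfb : Bd (fun x => f (b x)))
    (hf : ∀ s ∈ Icc η M, ∀ t ∈ Icc η M, |f s - f t| ≤ L * |s - t|) :
    Tendsto (fun n : ℕ => ((n : ℂ) ^ ν)⁻¹ *
      (toeplitz n (fun x => (a x : ℂ)) * cfc f (toeplitz n (fun x => (b x : ℂ)))).trace) atTop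
      (nhds ((av (fun x => a x * f (b x)) : ℝ) : ℂ)) := by
  have hrw : ∀ n : ℕ, ((n : ℂ) ^ ν)⁻¹ *
      (toeplitz n (fun x => (a x : ℂ)) * cfc f (toeplitz n (fun x => (b x : ℂ)))).trace =
      ((((n:ℝ) ^ ν)⁻¹ * ∑ i, f ((toeplitz_herm (n := n) b).eigenvalues i) *
        av (fun x => a x * wt (toeplitz_herm (n := n) b) i x) : ℝ) : ℂ) := by
    intro n
    rw [trace_av (toeplitz_herm b) ha]
    push_cast
    rfl
  simp only [hrw]
  refine (Complex.continuous_ofReal.tendsto _).comp ?_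
  obtain ⟨A, hA⟩ := ha.2
  have hA0 : 0 ≤ A := (abs_nonneg _).trans (hA 0)
  rw [Metric.tendsto_atTop']
  intro ε hε
  set δ := ε / (4 * (A * L + 1)) with hδd
  have hAL : 0 ≤ A * L := mul_nonneg hA0 hL
  have hδ : 0 < δ := by positivity
  obtain ⟨C, hC⟩ := hb.2
  have hlow := frob_lower (fun j : Fin ν → ℤ => ‖fourierCoefficient (fun x => (b x : ℂ)) j‖ ^ 2)
    (fun j => by positivity) _ (parseval b C hb.1 hC) (δ * δ) (by positivity)
  obtain ⟨n₀, hn₀⟩ := eventually_atTop.1 (hlow.and (eventually_gt_atTop 0))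
  refine ⟨n₀, fun n hn => ?_⟩
  obtain ⟨h1, h2⟩ := hn₀ n hn.le
  have hn0 : (0:ℝ) < (n:ℝ) ^ ν := by
    have : (0:ℝ) < n := by exact_mod_cast h2
    positivity
  have hk := key_bound (n := n) ha hb hA hL hδ hbm f hfb hf (toeplitz_herm b)
  rw [eig_sq hb] at hk
  rw [Real.dist_eq]
  set X := ∑ i, f ((toeplitz_herm (n := n) b).eigenvalues i) *
        av (fun x => a x * wt (toeplitz_herm (n := n) b) i x)
  set Y := ∑ j : Fin ν → Fin n, ∑ k : Fin ν → Fin n,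
      ‖fourierCoefficient (fun x => (b x : ℂ)) (fun i => (j i : ℤ) - (k i : ℤ))‖ ^ 2
  change av (fun x => b x ^ 2) - δ * δ < ((n:ℝ) ^ ν)⁻¹ * Y at h1
  set Z := av (fun x => b x ^ 2)
  set W := av (fun x => a x * f (b x))
  set p := (n:ℝ) ^ ν
  have e : p⁻¹ * X - W = p⁻¹ * (X - p * W) := by field_simp
  rw [e, abs_mul, abs_of_pos (inv_pos.2 hn0)]
  have h3 : p * Z - Y ≤ p * (δ * δ) := by
    rw [lt_inv_mul_iff₀ hn0] at h1
    linarith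
  have h4 : δ⁻¹ * (p * Z - Y) ≤ p * δ := by
    rw [inv_mul_le_iff₀ hδ]; linarith
  have h5 : |X - p * W| ≤ p * (A * L * (2 * δ)) := by
    refine hk.trans ?_
    have : δ * p + δ⁻¹ * (p * Z - Y) ≤ p * (2 * δ) := by linarith
    calc _ ≤ A * L * (p * (2 * δ)) := mul_le_mul_of_nonneg_left this hAL
      _ = _ := by ring
  rw [inv_mul_lt_iff₀ hn0]
  refine h5.trans_lt (mul_lt_mul_of_pos_left ?_ hn0)
  have h6 : (A * L + 1) * (4 * δ) = ε := by rw [hδd]; field_simp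
  nlinarith

section alg
variable {m : Type*} [Fintype m] [DecidableEq m]

/-- log x - log (1+x) -/
def f1 (x : ℝ) : ℝ := Real.log x - Real.log (1 + x)

/-- - log (1+x) -/
def f2 (x : ℝ) : ℝ := - Real.log (1 + x)

lemma contOn (f : ℝ → ℝ) (Q : Matrix m m ℂ) : ContinuousOn f (spectrum ℝ Q) :=
  Q.finite_real_spectrum.continuousOn f

lemma inv_cfc {Q : Matrix m m ℂ} (hQ : IsSelfAdjoint Q) (hpos : ∀ x ∈ spectrum ℝ Q, 0 < x) :
    (Q + 1)⁻¹ = cfc (fun x : ℝ => (1 + x)⁻¹) Q := by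
  apply Matrix.inv_eq_right_inv
  have h1 : Q + 1 = cfc (fun x : ℝ => x + 1) Q := by
    rw [cfc_add (a := Q) (fun x : ℝ => x) (fun _ => 1) (contOn _ _) (contOn _ _),
      cfc_id' ℝ Q, cfc_const_one ℝ Q]
  conv_lhs => rw [h1]
  rw [← cfc_mul _ _ Q (contOn _ _) (contOn _ _), ← cfc_const_one ℝ Q]
  refine cfc_congr fun x hx => ?_
  have := hpos x hx
  rw [add_comm x 1, mul_inv_cancel₀ (by positivity)]

lemma R_cfc {Q : Matrix m m ℂ} (hQ : IsSelfAdjoint Q) (hpos : ∀ x ∈ spectrum ℝ Q, 0 < x) :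
    Q * (Q + 1)⁻¹ = cfc (fun x : ℝ => x * (1 + x)⁻¹) Q := by
  rw [inv_cfc hQ hpos, cfc_mul (fun x : ℝ => x) _ Q (contOn _ _) (contOn _ _), cfc_id' ℝ Q]

lemma oneR_cfc {Q : Matrix m m ℂ} (hQ : IsSelfAdjoint Q) (hpos : ∀ x ∈ spectrum ℝ Q, 0 < x) :
    1 - Q * (Q + 1)⁻¹ = cfc (fun x : ℝ => (1 + x)⁻¹) Q := by
  rw [R_cfc hQ hpos]
  conv_lhs => rw [← cfc_const_one ℝ Q]
  rw [← cfc_sub (fun _ : ℝ => (1:ℝ)) _ Q (contOn _ _) (contOn _ _)]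
  refine cfc_congr fun x hx => ?_
  have := hpos x hx
  field_simp
  ring

lemma mlog_R {Q : Matrix m m ℂ} (hQ : IsSelfAdjoint Q) (hpos : ∀ x ∈ spectrum ℝ Q, 0 < x) :
    mlog (Q * (Q + 1)⁻¹) = cfc f1 Q := by
  rw [R_cfc hQ hpos, mlog, ← cfc_comp' Real.log _ Q
    ((Q.finite_real_spectrum.image _).continuousOn _) (contOn _ _)]
  refine cfc_congr fun x hx => ?_
  have := hpos x hx
  simp only [f1]
  rw [Real.log_mul (by positivity) (by positivity), Real.log_inv]
  ring

lemma mlog_oneR {Q : Matrix m m ℂ} (hQ : IsSelfAdjoint Q) (hpos : ∀ x ∈ spectrum ℝ Q, 0 < x) :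
    mlog (1 - Q * (Q + 1)⁻¹) = cfc f2 Q := by
  rw [oneR_cfc hQ hpos, mlog, ← cfc_comp' Real.log _ Q
    ((Q.finite_real_spectrum.image _).continuousOn _) (contOn _ _)]
  refine cfc_congr fun x hx => ?_
  simp only [f2]
  rw [Real.log_inv]

lemma S2_alg {Q P : Matrix m m ℂ} (hQ : IsSelfAdjoint Q) (hpos : ∀ x ∈ spectrum ℝ Q, 0 < x)
    (hP : IsSelfAdjoint P) (hPpos : ∀ x ∈ spectrum ℝ P, 0 < x) :
    (1 + Q) * S2mat (Q * (Q + 1)⁻¹) (P * (P + 1)⁻¹) =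
      Q * cfc f1 Q - Q * cfc f1 P + 1 * cfc f2 Q - 1 * cfc f2 P := by
  unfold S2mat
  rw [mlog_R hQ hpos, mlog_R hP hPpos, mlog_oneR hQ hpos, mlog_oneR hP hPpos]
  have h1 : 1 + Q = cfc (fun x : ℝ => 1 + x) Q := by
    rw [cfc_add (a := Q) (fun _ => 1) (fun x : ℝ => x) (contOn _ _) (contOn _ _),
      cfc_id' ℝ Q, cfc_const_one ℝ Q]
  have h2 : (1 + Q) * (Q * (Q + 1)⁻¹) = Q := by
    rw [R_cfc hQ hpos]
    conv_lhs => rw [h1]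
    rw [← cfc_mul _ _ Q (contOn _ _) (contOn _ _)]
    conv_rhs => rw [← cfc_id' ℝ Q]
    refine cfc_congr fun x hx => ?_
    have := hpos x hx
    field_simp
  have h3 : (1 + Q) * (1 - Q * (Q + 1)⁻¹) = 1 := by
    rw [mul_sub, h2]; simp
  rw [mul_add, ← mul_assoc (1 + Q) (Q * (Q + 1)⁻¹), ← mul_assoc (1 + Q) (1 - Q * (Q + 1)⁻¹), h2, h3]
  simp only [mul_sub]
  abel

end alg

lemma loglip {η s t : ℝ} (hη : 0 < η) (hs : η ≤ s) (ht : η ≤ t) :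
    |Real.log s - Real.log t| ≤ η⁻¹ * |s - t| := by
  have key : ∀ s t : ℝ, η ≤ s → η ≤ t → Real.log s - Real.log t ≤ η⁻¹ * |s - t| := by
    intro s t hs ht
    have hs0 : 0 < s := hη.trans_le hs
    have ht0 : 0 < t := hη.trans_le ht
    rw [← Real.log_div hs0.ne' ht0.ne']
    refine (Real.log_le_sub_one_of_pos (by positivity)).trans ?_
    have : s / t - 1 = t⁻¹ * (s - t) := by field_simp
    rw [this]
    calc t⁻¹ * (s - t) ≤ t⁻¹ * |s - t| :=
          mul_le_mul_of_nonneg_left (le_abs_self _) (by positivity)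
      _ ≤ η⁻¹ * |s - t| := mul_le_mul_of_nonneg_right (inv_anti₀ hη ht) (abs_nonneg _)
  rw [abs_le]
  constructor
  · have := key t s ht hs
    rw [abs_sub_comm] at this; linarith
  · exact key s t hs ht

lemma clamp {ν : ℕ} (q : (Fin ν → ℝ) → ℝ) {η M : ℝ} (hηM : η ≤ M) (hm : Measurable q)
    (hq : ∀ᵐ x ∂(volume.restrict (cube ν)), q x ∈ Set.Icc η M) :
    ∃ c : (Fin ν → ℝ) → ℝ, Measurable c ∧ (∀ x, c x ∈ Icc η M) ∧
      ∀ᵐ x ∂(volume.restrict (cube ν)), q x = c x := by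
  refine ⟨fun x => max η (min M (q x)), measurable_const.max (measurable_const.min hm),
    fun x => ⟨le_max_left _ _, max_le hηM (min_le_left _ _)⟩, ?_⟩
  filter_upwards [hq] with x hx
  rw [min_eq_right hx.2, max_eq_right hx.1]

lemma toeplitz_congr {ν : ℕ} (n : ℕ) {q c : (Fin ν → ℝ) → ℝ}
    (h : ∀ᵐ x ∂(volume.restrict (cube ν)), q x = c x) :
    toeplitz n (fun x => (q x : ℂ)) = toeplitz n (fun x => (c x : ℂ)) := by
  ext j k
  simp only [toeplitz, Matrix.of_apply, fourierCoefficient]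
  congr 1
  refine integral_congr_ae ?_
  filter_upwards [h] with x hx
  rw [hx]

lemma bd_of_lip {ν : ℕ} {b : (Fin ν → ℝ) → ℝ} (hb : Measurable b) {η M L : ℝ}
    (hL : 0 ≤ L) (hbm : ∀ x, b x ∈ Icc η M) (f : ℝ → ℝ) (hfm : Measurable f)
    (hf : ∀ s ∈ Icc η M, ∀ t ∈ Icc η M, |f s - f t| ≤ L * |s - t|) :
    Bd (fun x => f (b x)) := by
  refine ⟨hfm.comp hb, |f (b 0)| + L * (M - η), fun x => ?_⟩
  have h1 := hf (b x) (hbm x) (b 0) (hbm 0)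
  have h2 : |b x - b 0| ≤ M - η := by
    rw [abs_le]; constructor <;> linarith [(hbm x).1, (hbm x).2, (hbm 0).1, (hbm 0).2]
  have h3 : |f (b x)| - |f (b 0)| ≤ |f (b x) - f (b 0)| := abs_sub_abs_le_abs_sub _ _
  have h4 := mul_le_mul_of_nonneg_left h2 hL
  linarith

lemma main_bdd {ν : ℕ} (q₁ q₂ : (Fin ν → ℝ) → ℝ) {η M : ℝ} (hη : 0 < η)
    (hmeas₁ : Measurable q₁) (hmeas₂ : Measurable q₂)
    (hq₁ : ∀ x, q₁ x ∈ Set.Icc η M) (hq₂ : ∀ x, q₂ x ∈ Set.Icc η M) :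
    Tendsto
      (fun n : ℕ => ((n : ℂ) ^ ν)⁻¹ *
        ((1 + toeplitz n (fun x => (q₁ x : ℂ))) *
          S2mat
            (toeplitz n (fun x => (q₁ x : ℂ)) *
              (toeplitz n (fun x => (q₁ x : ℂ)) + 1)⁻¹)
            (toeplitz n (fun x => (q₂ x : ℂ)) *
              (toeplitz n (fun x => (q₂ x : ℂ)) + 1)⁻¹)).trace)
      atTop
      (nhds ((((2 * Real.pi) ^ ν : ℝ)⁻¹ *
        ∫ x in cube ν,
          (1 + q₁ x) * S2s (q₁ x / (1 + q₁ x)) (q₂ x / (1 + q₂ x)) : ℝ) : ℂ)) := by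
  have hbd : ∀ q : (Fin ν → ℝ) → ℝ, Measurable q → (∀ x, q x ∈ Icc η M) → Bd q := by
    intro q hm hq
    exact ⟨hm, M, fun x => abs_le.2 ⟨by linarith [(hq x).1, (hq x).2], (hq x).2⟩⟩
  have hQ₁ := hbd q₁ hmeas₁ hq₁
  have hQ₂ := hbd q₂ hmeas₂ hq₂
  have hf2 : ∀ s ∈ Icc η M, ∀ t ∈ Icc η M, |f2 s - f2 t| ≤ (2 * η⁻¹) * |s - t| := by
    intro s hs t ht
    have h := loglip hη (s := 1 + s) (t := 1 + t) (by linarith [hs.1]) (by linarith [ht.1])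
    have e : 1 + s - (1 + t) = s - t := by ring
    rw [e] at h
    have e2 : f2 s - f2 t = -(Real.log (1 + s) - Real.log (1 + t)) := by unfold f2; ring
    rw [e2, abs_neg]
    have : 0 ≤ η⁻¹ * |s - t| := by positivity
    linarith
  have hf1 : ∀ s ∈ Icc η M, ∀ t ∈ Icc η M, |f1 s - f1 t| ≤ (2 * η⁻¹) * |s - t| := by
    intro s hs t ht
    have h := loglip hη (s := 1 + s) (t := 1 + t) (by linarith [hs.1]) (by linarith [ht.1])
    have e : 1 + s - (1 + t) = s - t := by ring
    rw [e] at h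
    have h' := loglip hη hs.1 ht.1
    have e2 : f1 s - f1 t = (Real.log s - Real.log t) - (Real.log (1 + s) - Real.log (1 + t)) := by
      unfold f1; ring
    rw [e2]
    refine (abs_sub _ _).trans ?_
    linarith
  have hm1 : Measurable f1 := by unfold f1; fun_prop
  have hm2 : Measurable f2 := by unfold f2; fun_prop
  have hL : 0 ≤ 2 * η⁻¹ := by positivity
  have b11 := bd_of_lip hmeas₁ hL hq₁ f1 hm1 hf1
  have b12 := bd_of_lip hmeas₂ hL hq₂ f1 hm1 hf1
  have b21 := bd_of_lip hmeas₁ hL hq₁ f2 hm2 hf2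
  have b22 := bd_of_lip hmeas₂ hL hq₂ f2 hm2 hf2
  have l1 := key_limit hQ₁ hQ₁ hL hq₁ f1 b11 hf1
  have l2 := key_limit hQ₁ hQ₂ hL hq₂ f1 b12 hf1
  have l3 := key_limit (Bd.const 1) hQ₁ hL hq₁ f2 b21 hf2
  have l4 := key_limit (Bd.const 1) hQ₂ hL hq₂ f2 b22 hf2
  have hl := ((l1.sub l2).add l3).sub l4
  have hpos : ∀ (q : (Fin ν → ℝ) → ℝ), Measurable q → (∀ x, q x ∈ Icc η M) → ∀ n,
      ∀ x ∈ spectrum ℝ (toeplitz n (fun x => (q x : ℂ))), 0 < x := by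
    intro q hm hq n x hx
    rw [(toeplitz_herm (n := n) q).spectrum_real_eq_range_eigenvalues] at hx
    obtain ⟨i, rfl⟩ := hx
    exact hη.trans_le (eig_mem (hbd q hm hq) hq (toeplitz_herm q) i).1
  have hlim : ((2 * Real.pi) ^ ν : ℝ)⁻¹ *
        ∫ x in cube ν, (1 + q₁ x) * S2s (q₁ x / (1 + q₁ x)) (q₂ x / (1 + q₂ x)) =
      av (fun x => q₁ x * f1 (q₁ x)) - av (fun x => q₁ x * f1 (q₂ x)) +
        av (fun x => 1 * f2 (q₁ x)) - av (fun x => 1 * f2 (q₂ x)) := by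
    have c := Bd.const (ν := ν) 1
    rw [← av_sub (hQ₁.mul b11) (hQ₁.mul b12),
      ← av_add ((hQ₁.mul b11).sub (hQ₁.mul b12)) (c.mul b21),
      ← av_sub (((hQ₁.mul b11).sub (hQ₁.mul b12)).add (c.mul b21)) (c.mul b22)]
    unfold av
    congr 2
    ext x
    have h1 : 0 < q₁ x := hη.trans_le (hq₁ x).1
    have h2 : 0 < q₂ x := hη.trans_le (hq₂ x).1
    have hr : ∀ q : ℝ, 0 < q → 1 - q / (1 + q) = (1 + q)⁻¹ := by
      intro q hq; field_simp; ring
    unfold S2s f1 f2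
    rw [hr _ h1, hr _ h2, Real.log_inv, Real.log_inv, Real.log_div h1.ne' (by positivity),
      Real.log_div h2.ne' (by positivity)]
    field_simp
    ring
  rw [hlim]
  push_cast
  refine hl.congr fun n => ?_
  rw [S2_alg (toeplitz_herm q₁).isSelfAdjoint (hpos q₁ hmeas₁ hq₁ n)
    (toeplitz_herm q₂).isSelfAdjoint (hpos q₂ hmeas₂ hq₂ n)]
  rw [Matrix.trace_sub, Matrix.trace_add, Matrix.trace_sub]
  simp only [Complex.ofReal_one, toeplitz_one]
  ring

/-- **Szegő-type limit for the relative entropy density.**  With `Q_k⁽ⁿ⁾ = T_n(q_k)`,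
`R_{k,n} = Q_k⁽ⁿ⁾(Q_k⁽ⁿ⁾+I)⁻¹` and `r_k = q_k/(1+q_k)`:
`lim_n (1/n^ν) Tr[(I + Q₁⁽ⁿ⁾) S₂(R_{1,n}‖R_{2,n})]
  = (2π)^{−ν} ∫ (1+q₁(x)) S₂(r₁(x)‖r₂(x)) dx`. -/
theorem trace_S2_limit {ν : ℕ} (hν : 1 ≤ ν)
    (q₁ q₂ : (Fin ν → ℝ) → ℝ) (η M : ℝ) (hη : 0 < η) (hηM : η ≤ M)
    (hmeas₁ : Measurable q₁) (hmeas₂ : Measurable q₂)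
    (hq₁ : ∀ᵐ x ∂(volume.restrict (cube ν)), q₁ x ∈ Set.Icc η M)
    (hq₂ : ∀ᵐ x ∂(volume.restrict (cube ν)), q₂ x ∈ Set.Icc η M) :
    Tendsto
      (fun n : ℕ => ((n : ℂ) ^ ν)⁻¹ *
        ((1 + toeplitz n (fun x => (q₁ x : ℂ))) *
          S2mat
            (toeplitz n (fun x => (q₁ x : ℂ)) *
              (toeplitz n (fun x => (q₁ x : ℂ)) + 1)⁻¹)
            (toeplitz n (fun x => (q₂ x : ℂ)) *
              (toeplitz n (fun x => (q₂ x : ℂ)) + 1)⁻¹)).trace)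
      atTop
      (nhds ((((2 * Real.pi) ^ ν : ℝ)⁻¹ *
        ∫ x in cube ν,
          (1 + q₁ x) * S2s (q₁ x / (1 + q₁ x)) (q₂ x / (1 + q₂ x)) : ℝ) : ℂ)) := by
  obtain ⟨c₁, hc₁, hb₁, he₁⟩ := clamp q₁ hηM hmeas₁ hq₁
  obtain ⟨c₂, hc₂, hb₂, he₂⟩ := clamp q₂ hηM hmeas₂ hq₂
  have hT₁ : ∀ n, toeplitz n (fun x => (q₁ x : ℂ)) = toeplitz n (fun x => (c₁ x : ℂ)) :=
    fun n => toeplitz_congr n he₁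
  have hT₂ : ∀ n, toeplitz n (fun x => (q₂ x : ℂ)) = toeplitz n (fun x => (c₂ x : ℂ)) :=
    fun n => toeplitz_congr n he₂
  have hI : ∫ x in cube ν, (1 + q₁ x) * S2s (q₁ x / (1 + q₁ x)) (q₂ x / (1 + q₂ x)) =
      ∫ x in cube ν, (1 + c₁ x) * S2s (c₁ x / (1 + c₁ x)) (c₂ x / (1 + c₂ x)) := by
    refine integral_congr_ae ?_
    filter_upwards [he₁, he₂] with x h1 h2
    rw [h1, h2]
  rw [hI]
  simp only [hT₁, hT₂]
  exact main_bdd c₁ c₂ hη hc₁ hc₂ hb₁ hb₂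

end
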